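/- There exists an injective group homomorphism φ from the dihedral group D_{4n} of order 8n into the group of bijections of A = A'/⟨w⟩ such that: (1) for every g ∈ D_{4n}, φ(g) is an affine transformation of A, i.e., of the form x ↦ α(x) + a for some additive automorphism α of A and some a ∈ A; (2) for every g ≠ 1 in D_{4n}, φ(g) has no fixed points on A; and (3) for every g ≠ 1 in D_{4n}, φ(g) is not a translation, i.e., not of the form x ↦ x + a. -/

import Mathlib

noncomputable section

/-- The lattice Λ = ℤ + ℤτ as an additive subgroup of ℂ. -/
def Lam (τ : ℂ) : AddSubgroup ℂ := AddSubgroup.closure {1, τ}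

/-- The "elliptic curve" E = ℂ/(ℤ + ℤτ) as an additive group. -/
abbrev Ell (τ : ℂ) : Type := ℂ ⧸ Lam τ

/-- A' = E^{2n} × E'. -/
abbrev Aprime (n : ℕ) (τ τ' : ℂ) : Type := (Fin (2*n) → Ell τ) × Ell τ'

/-- w = (1/2, 1/2, ..., 1/2, 0) ∈ A'. -/
def wpt (n : ℕ) (τ τ' : ℂ) : Aprime n τ τ' :=
  (fun _ => ((1/2 : ℂ) : Ell τ), 0)

/-- The subgroup ⟨w⟩ of A' generated by w. -/
def wsub (n : ℕ) (τ τ' : ℂ) : AddSubgroup (Aprime n τ τ') :=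
  AddSubgroup.closure {wpt n τ τ'}

/-- A = A'/⟨w⟩. -/
abbrev Aq (n : ℕ) (τ τ' : ℂ) : Type := Aprime n τ τ' ⧸ wsub n τ τ'

/-- R(z₁,...,z_{2n},z_{2n+1}) = (-z_{2n}, z₁, ..., z_{2n-1}, z_{2n+1}). -/
def Rmap (n : ℕ) (τ τ' : ℂ) : Aprime n τ τ' → Aprime n τ τ' :=
  fun z => (fun i =>
    if i.val = 0 then -z.1 ⟨2*n-1, by have := i.isLt; omega⟩
    else z.1 ⟨i.val - 1, by have := i.isLt; omega⟩, z.2)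

/-- The class of 1/(4n) in E'. -/
def cE' (n : ℕ) (τ' : ℂ) : Ell τ' := ((1/(4*(n : ℂ)) : ℂ) : Ell τ')

/-- r(z) = R(z) + (0, ..., 0, 1/(4n)). -/
def rmap (n : ℕ) (τ τ' : ℂ) : Aprime n τ τ' → Aprime n τ τ' :=
  fun z => ((Rmap n τ τ' z).1, (Rmap n τ τ' z).2 + cE' n τ')

/-- The translation vector b: b_{2i-1} = 1/2 + τ/2, b_{2i} = τ/2 (1-indexed),
i.e. in 0-indexed terms, even indices carry 1/2 + τ/2 and odd indices carry τ/2. -/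
def bvec (n : ℕ) (τ : ℂ) : Fin (2*n) → Ell τ :=
  fun i => if i.val % 2 = 0 then ((1/2 + τ/2 : ℂ) : Ell τ) else ((τ/2 : ℂ) : Ell τ)

/-- S(z₁,...,z_{2n},z_{2n+1}) = (-z_{2n}, -z_{2n-1}, ..., -z₁, -z_{2n+1}). -/
def Smap (n : ℕ) (τ τ' : ℂ) : Aprime n τ τ' → Aprime n τ τ' :=
  fun z => (fun i => -z.1 ⟨2*n-1-i.val, by have := i.isLt; omega⟩, -z.2)

/-- s(z) = S(z) + (b₁, ..., b_{2n}, 0). -/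
def smap (n : ℕ) (τ τ' : ℂ) : Aprime n τ τ' → Aprime n τ τ' :=
  fun z => (fun i => -z.1 ⟨2*n-1-i.val, by have := i.isLt; omega⟩ + bvec n τ i, -z.2)

/-! An affine action on an abelian group is a linear representation together with a 1-cocycle.
Realise `E ^ (2n)` as the functions on the vertices of a regular `4n`-gon that change sign under the
antipodal map. The dihedral group permutes the vertices, and acts on `E'` through the determinant;
both actions descend to `A`. The cocycle sends `r^j` to the class of `(0, j c)` with `c` of order
`4n`, so no nontrivial rotation fixes the last coordinate. It sends `s r^j` to the class of
`(b, -j c)`, where `b` takes the values `t` and `t + h` alternately, `h` is the class of `1/2` and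
`t` is a 2-torsion point outside `⟨h⟩`. If the axis of a reflection passes through a vertex, the
fixed point equation at that vertex puts `t` in `⟨h⟩`. Otherwise mirror vertices have opposite
parity, and the equations at two mirror vertices add up to `h = 0`. Finally, no element is a
translation because the linear part of the action is faithful. -/

section AffineAction

variable {G A B : Type*} [Group G] [AddCommGroup A] [AddCommGroup B]

/-- `G` acts faithfully by affine bijections on the abelian group `A` in such a way that no
`g ≠ 1` has a fixed point or acts as a translation. -/
def HasFreeAffineAction (G A : Type*) [Group G] [AddCommGroup A] : Prop :=
  ∃ φ : G →* Equiv.Perm A,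
    Function.Injective φ ∧
    (∀ g, ∃ α : A ≃+ A, ∃ a, ∀ x, φ g x = α x + a) ∧
    (∀ g, g ≠ 1 → ∀ x, φ g x ≠ x) ∧
    (∀ g, g ≠ 1 → ¬ ∃ a, ∀ x, φ g x = x + a)

theorem HasFreeAffineAction.of_addEquiv (e : A ≃+ B) (hA : HasFreeAffineAction G A) :
    HasFreeAffineAction G B := by
  obtain ⟨φ, hinj, haff, hfree, htrans⟩ := hA
  let ψ : G →* Equiv.Perm B := e.toEquiv.permCongrHom.toMonoidHom.comp φ
  have hψ (g : G) (y : B) : ψ g y = e (φ g (e.symm y)) := rfl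
  refine ⟨ψ, e.toEquiv.permCongrHom.injective.comp hinj, fun g ↦ ?_, fun g hg y hy ↦ ?_, ?_⟩
  · obtain ⟨α, a, hα⟩ := haff g
    exact ⟨(e.symm.trans α).trans e, e a, fun y ↦ by simp [hψ, hα]⟩
  · exact hfree g hg (e.symm y) (e.eq_symm_apply.2 ((hψ g y).symm.trans hy))
  · rintro g hg ⟨b, hb⟩
    refine htrans g hg ⟨e.symm b, fun x ↦ e.injective ?_⟩
    simpa [hψ] using hb (e x)

/-- The action `g • x = ρ g x + f g` by affine bijections attached to a linear representation `ρ`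
and a `1`-cocycle `f`. -/
def affinePermHom (ρ : G →* AddMonoid.End A) (f : G → A)
    (hf : ∀ g h, f (g * h) = f g + ρ g (f h)) : G →* Equiv.Perm A :=
  MonoidHom.toHomPerm
    { toFun g x := ρ g x + f g
      map_one' := by
        have hf_one : f 1 = 0 := by simpa using hf 1 1
        funext x
        change ρ 1 x + f 1 = x
        rw [map_one, AddMonoid.End.one_apply, hf_one, add_zero]
      map_mul' g h := by
        funext x
        change ρ (g * h) x + f (g * h) = ρ g (ρ h x + f h) + f g
        rw [map_mul, AddMonoid.End.coe_mul, Function.comp_apply, hf, map_add, add_assoc,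
          add_comm (f g)] }

theorem hasFreeAffineAction_of_cocycle (ρ : G →* AddMonoid.End A) (f : G → A)
    (hf : ∀ g h, f (g * h) = f g + ρ g (f h)) (hρ : ∀ g ≠ 1, ∃ x, ρ g x ≠ x)
    (hfree : ∀ g ≠ 1, ∀ x, ρ g x + f g ≠ x) : HasFreeAffineAction G A := by
  have hφ (g : G) (x : A) : affinePermHom ρ f hf g x = ρ g x + f g := rfl
  refine ⟨affinePermHom ρ f hf, ?_, fun g ↦ ?_, hfree, ?_⟩
  · refine (injective_iff_map_eq_one _).2 fun g hg ↦ by_contra fun hne ↦ hfree g hne 0 ?_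
    rw [← hφ, hg, Equiv.Perm.one_apply]
  · have hcomp {a b : G} (hab : a * b = 1) :
        (ρ a : A →+ A).comp (ρ b : A →+ A) = AddMonoidHom.id A :=
      (map_mul ρ a b).symm.trans (hab ▸ map_one ρ)
    exact ⟨AddMonoidHom.toAddEquiv (ρ g) (ρ g⁻¹) (hcomp (inv_mul_cancel g))
      (hcomp (mul_inv_cancel g)), f g, hφ g⟩
  · rintro g hg ⟨a, ha⟩
    have ha_eq : f g = a := by simpa [hφ] using ha 0
    obtain ⟨x, hx⟩ := hρ g hg
    exact hx (add_right_cancel (((hφ g x).symm.trans (ha x)).trans (by rw [ha_eq])))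

/-- The representation induced on the quotient by an invariant subgroup. -/
def quotientRep (ρ : G →* AddMonoid.End A) (W : AddSubgroup A) (hW : ∀ g, W ≤ W.comap (ρ g)) :
    G →* AddMonoid.End (A ⧸ W) where
  toFun g := QuotientAddGroup.map W W (ρ g) (hW g)
  map_one' := AddMonoidHom.ext fun x ↦ QuotientAddGroup.induction_on x fun a ↦
    congrArg (fun f : AddMonoid.End A ↦ (f a : A ⧸ W)) (map_one ρ)
  map_mul' g h := AddMonoidHom.ext fun x ↦ QuotientAddGroup.induction_on x fun a ↦
    congrArg (fun f : AddMonoid.End A ↦ (f a : A ⧸ W)) (map_mul ρ g h)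

theorem quotientRep_mk (ρ : G →* AddMonoid.End A) (W : AddSubgroup A)
    (hW : ∀ g, W ≤ W.comap (ρ g)) (g : G) (a : A) :
    quotientRep ρ W hW g (a : A ⧸ W) = (ρ g a : A) := rfl

end AffineAction

section Dihedral

open DihedralGroup

variable {N : ℕ}

/-- The cocycle `r j ↦ γ j`, `s r^j ↦ β - γ j` with values in a representation of the dihedral
group. -/
def dihedralCocycle {A : Type*} [AddCommGroup A] (γ : ZMod N →+ A) (β : A) : DihedralGroup N → A
  | r j => γ j
  | sr j => β - γ j

theorem dihedralCocycle_mul {A : Type*} [AddCommGroup A] {ρ : DihedralGroup N →* AddMonoid.End A}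
    {γ : ZMod N →+ A} {β : A} (hr : ∀ i j, ρ (r i) (γ j) = γ j)
    (hsr : ∀ i j, ρ (sr i) (γ j) = -γ j) (hβ : ∀ g, ρ g β = β) (hβ_two : 2 • β = 0)
    (g h : DihedralGroup N) :
    dihedralCocycle γ β (g * h) = dihedralCocycle γ β g + ρ g (dihedralCocycle γ β h) := by
  rcases g with i | i <;> rcases h with j | j <;>
    simp only [dihedralCocycle, r_mul_r, r_mul_sr, sr_mul_r, sr_mul_sr, map_add, map_sub, hr, hsr,
      hβ]
  · abel
  · abel
  · calc γ j - γ i = 2 • β + (γ j - γ i) := by rw [hβ_two, zero_add]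
      _ = β - γ i + (β - -γ j) := by abel

/-- The permutation of the vertices `ZMod N` of a regular `N`-gon by which `g⁻¹` acts. The axis of
`sr 0` is chosen to exchange the vertices `0` and `-1`. -/
def dihedralVertex : DihedralGroup N → ZMod N → ZMod N
  | r j, i => i - j
  | sr j, i => -1 - j - i

theorem dihedralVertex_one (i : ZMod N) : dihedralVertex 1 i = i := sub_zero i

theorem dihedralVertex_mul (g h : DihedralGroup N) (i : ZMod N) :
    dihedralVertex (g * h) i = dihedralVertex h (dihedralVertex g i) := by
  rcases g with j | j <;> rcases h with k | k <;>
    simp only [dihedralVertex, r_mul_r, r_mul_sr, sr_mul_r, sr_mul_sr] <;> ring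

/-- The determinant of the isometry `g` of the plane: `1` on rotations, `-1` on reflections. -/
def dihedralSign : DihedralGroup N →* ℤˣ where
  toFun
    | r _ => 1
    | sr _ => -1
  map_one' := rfl
  map_mul' g h := by rcases g with i | i <;> rcases h with j | j <;> rfl

end Dihedral

section ZModHom

variable {M : Type*} [AddCommGroup M] {N : ℕ} {π : ZMod N →+ M} {t : M}

theorem exists_zmod_addMonoidHom_one_eq {x : M} (hx : N • x = 0) :
    ∃ π : ZMod N →+ M, π 1 = x := by
  refine ⟨ZMod.lift N ⟨zmultiplesHom M x, by simpa using hx⟩, ?_⟩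
  simpa using ZMod.lift_coe N ⟨zmultiplesHom M x, by simpa using hx⟩ 1

theorem exists_injective_zmod_addMonoidHom (x : M) :
    ∃ χ : ZMod (addOrderOf x) →+ M, Function.Injective χ := by
  refine ⟨ZMod.lift _ ⟨zmultiplesHom M x, by simp⟩, (ZMod.lift_injective _).2 fun k hk ↦ ?_⟩
  rw [ZMod.intCast_zmod_eq_zero_iff_dvd]
  exact addOrderOf_dvd_iff_zsmul_eq_zero.2 hk

theorem map_intCast_eq_zsmul (k : ℤ) : π k = k • π 1 := by
  rw [← map_zsmul, zsmul_one]

theorem two_nsmul_map_eq_zero (hπ : 2 • π 1 = 0) (i : ZMod N) : 2 • π i = 0 := by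
  obtain ⟨k, rfl⟩ := ZMod.intCast_surjective i
  rw [map_intCast_eq_zsmul, smul_comm, hπ, smul_zero]

theorem two_nsmul_add_map_eq_zero (ht : 2 • t = 0) (hπ : 2 • π 1 = 0) (i : ZMod N) :
    2 • (t + π i) = 0 := by
  rw [nsmul_add, ht, two_nsmul_map_eq_zero hπ, add_zero]

end ZModHom

section AntiperiodicModel

open DihedralGroup AddSubgroup

variable {N : ℕ} (E E' : Type*) [AddCommGroup E] [AddCommGroup E'] (c : ZMod N)

/-- The group of `E`-valued functions `f` on `ZMod N` with `f (i + c) = -f i`. For `N = 4n` and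
`c = 2n` it is a model of `E ^ (2n)` on which the dihedral group acts by permuting vertices. -/
def antiperiodicFun : AddSubgroup (ZMod N → E) where
  carrier := {f | Function.Antiperiodic f c}
  zero_mem' _ := neg_zero.symm
  add_mem' {f g} hf hg i := by
    rw [Pi.add_apply, Pi.add_apply, hf i, hg i, neg_add]
  neg_mem' hf i := by simp [hf i]

variable {E c} in
theorem antiperiodic_comp_dihedralVertex {f : ZMod N → E} (hf : Function.Antiperiodic f c)
    (g : DihedralGroup N) : Function.Antiperiodic (fun i ↦ f (dihedralVertex g i)) c := by
  intro i
  rcases g with j | j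
  · exact (congrArg f (add_sub_right_comm i c j)).trans (hf _)
  · exact (congrArg f (sub_add_eq_sub_sub _ i c)).trans (hf.sub_eq _)

/-- The linear part of the action on `E ^ (2n) × E'`: vertices are permuted in the first factor and
reflections act by `-1` on the second. -/
def dihedralRep : DihedralGroup N →* AddMonoid.End (antiperiodicFun E c × E') where
  toFun g :=
    { toFun x := (⟨fun i ↦ x.1.1 (dihedralVertex g i), antiperiodic_comp_dihedralVertex x.1.2 g⟩,
        dihedralSign g • x.2)
      map_zero' := Prod.ext rfl (smul_zero _)
      map_add' _ _ := Prod.ext rfl (smul_add _ _ _) }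
  map_one' := AddMonoidHom.ext fun x ↦ Prod.ext
    (Subtype.ext (funext fun i ↦ congrArg x.1.1 (dihedralVertex_one i))) (one_smul _ _)
  map_mul' g h := AddMonoidHom.ext fun x ↦ Prod.ext
    (Subtype.ext (funext fun i ↦ congrArg x.1.1 (dihedralVertex_mul g h i)))
    ((congrArg (· • x.2) (map_mul dihedralSign g h)).trans (mul_smul _ _ _))

/-- The subgroup generated by the constant function `h` in the first factor; `h` is meant to be of
order two, so that the constant function is antiperiodic. -/
def constSubgroup (h : E) : AddSubgroup (antiperiodicFun E c × E') :=
  ((zmultiples (Function.const (ZMod N) h)).addSubgroupOf (antiperiodicFun E c)).prod ⊥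

variable {E E' c}

theorem mem_constSubgroup {h : E} {x : antiperiodicFun E c × E'} :
    x ∈ constSubgroup E E' c h ↔ (∃ m : ℤ, ∀ i, x.1.1 i = m • h) ∧ x.2 = 0 := by
  simp [constSubgroup, mem_prod, mem_addSubgroupOf, mem_zmultiples_iff, funext_iff, eq_comm]

theorem constSubgroup_le_comap_dihedralRep (h : E) (g : DihedralGroup N) :
    constSubgroup E E' c h ≤ (constSubgroup E E' c h).comap (dihedralRep E E' c g) := by
  intro x hx
  obtain ⟨⟨m, hm⟩, hx_snd⟩ := mem_constSubgroup.1 hx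
  exact mem_constSubgroup.2 ⟨⟨m, fun i ↦ hm (dihedralVertex g i)⟩,
    (congrArg (dihedralSign g • ·) hx_snd).trans (smul_zero _)⟩

variable (E E' c) in
/-- The group `E ^ (2n) × E'` modulo a diagonal element `(h, …, h, 0)`, in the antiperiodic
model. -/
abbrev AntiperiodicQuotient (h : E) : Type _ :=
  (antiperiodicFun E c × E') ⧸ constSubgroup E E' c h

variable (E E' c) in
/-- The action on `AntiperiodicQuotient` induced by `dihedralRep`. -/
def dihedralQuotientRep (h : E) :
    DihedralGroup N →* AddMonoid.End (AntiperiodicQuotient E E' c h) :=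
  quotientRep (dihedralRep E E' c) _ (constSubgroup_le_comap_dihedralRep h)

theorem antiperiodicQuotient_mk_eq_mk {h : E} {x y : antiperiodicFun E c × E'} :
    (x : AntiperiodicQuotient E E' c h) = y ↔
      (∃ m : ℤ, ∀ i, x.1.1 i - y.1.1 i = m • h) ∧ x.2 = y.2 := by
  rw [QuotientAddGroup.eq_iff_sub_mem, mem_constSubgroup]
  simp [sub_eq_zero]

theorem exists_dihedralQuotientRep_sr_ne (h : E) {y : E'} (hy : 2 • y ≠ 0) (j : ZMod N) :
    ∃ x, dihedralQuotientRep E E' c h (sr j) x ≠ x := by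
  refine ⟨((0, y) : antiperiodicFun E c × E'), fun hfix ↦ hy ?_⟩
  have hy_neg : (-1 : ℤˣ) • y = y := (antiperiodicQuotient_mk_eq_mk.1 hfix).2
  rw [Units.neg_smul, one_smul] at hy_neg
  rw [two_nsmul, ← eq_neg_iff_add_eq_zero, hy_neg]

theorem antiperiodic_single_sub_single (hc_two : c + c = 0) (e : E) :
    Function.Antiperiodic (Pi.single 0 e - Pi.single c e : ZMod N → E) c := by
  intro i
  have hi : i + c = 0 ↔ i = c := by rw [add_eq_zero_iff_eq_neg, neg_eq_of_add_eq_zero_left hc_two]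
  simp [Pi.single_apply, hi]

theorem exists_dihedralQuotientRep_r_ne {h e : E} (hc : c ≠ 0) (hc_one : c ≠ 1)
    (hc_two : c + c = 0) (hh : 2 • h = 0) (he : 2 • e ≠ 0) {j : ZMod N} (hj : j ≠ 0) :
    ∃ x, dihedralQuotientRep E E' c h (r j) x ≠ x := by
  set f : ZMod N → E := Pi.single 0 e - Pi.single c e with hf_def
  have hf_zero : f 0 = e := by simp [hf_def, hc.symm]
  have hf_off {i : ZMod N} (hi : i ≠ 0) (hic : i ≠ c) : f i = 0 := by simp [hf_def, hi, hic]
  have hf : Function.Antiperiodic f c := antiperiodic_single_sub_single hc_two e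
  have hc_neg : -c = c := neg_eq_of_add_eq_zero_left hc_two
  refine ⟨((⟨f, hf⟩, 0) : antiperiodicFun E c × E'), fun hfix ↦ he ?_⟩
  obtain ⟨m, hm⟩ : ∃ m : ℤ, ∀ i, f (i - j) - f i = m • h :=
    (antiperiodicQuotient_mk_eq_mk.1 hfix).1
  have hm_two : 2 • m • h = 0 := by rw [smul_comm, hh, smul_zero]
  have h_zero : f (-j) - e = m • h := by simpa [hf_zero] using hm 0
  by_cases hjc : j = c
  · have hone_zero : (1 : ZMod N) ≠ 0 := fun h_one ↦ hc (by rw [← mul_one c, h_one, mul_zero])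
    have hone : f (1 - c) - f 1 = m • h := hjc ▸ hm 1
    rw [hf.sub_eq, hf_off hone_zero hc_one.symm, neg_zero, sub_zero] at hone
    rw [hjc, hc_neg, ← zero_add c, hf, hf_zero, ← hone] at h_zero
    rw [two_nsmul, ← neg_eq_zero, neg_add', h_zero]
  · rw [hf_off (neg_ne_zero.2 hj) fun hj' ↦ hjc (by rw [← hc_neg, ← hj', neg_neg]), zero_sub]
      at h_zero
    rw [← neg_eq_zero, ← smul_neg, h_zero, hm_two]

variable {χ : ZMod N →+ E'} {π : ZMod N →+ E} {t : E}

theorem dihedralQuotientRep_r_add_ne (h : E) (hχ : Function.Injective χ) {j : ZMod N} (hj : j ≠ 0)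
    (x : AntiperiodicQuotient E E' c h) :
    dihedralQuotientRep E E' c h (r j) x +
      ((0, χ j) : antiperiodicFun E c × E') ≠ x := by
  induction x using QuotientAddGroup.induction_on with | H z
  intro hfix
  have hz : (1 : ℤˣ) • z.2 + χ j = z.2 := (antiperiodicQuotient_mk_eq_mk.1 hfix).2
  rw [one_smul, add_eq_left] at hz
  exact hj (hχ (hz.trans (map_zero χ).symm))

/-- The function `i ↦ t + π i`, which alternates between `t` and `t + π 1`. Its class is the
translation part of the reflection `sr 0`. -/
def alternatingFun (ht : 2 • t = 0) (hπ : 2 • π 1 = 0) (hπ_c : π c = 0) : antiperiodicFun E c where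
  val i := t + π i
  property i := by
    change t + π (i + c) = -(t + π i)
    rw [map_add, hπ_c, add_zero, ← add_eq_zero_iff_eq_neg, ← two_nsmul,
      two_nsmul_add_map_eq_zero ht hπ]

theorem dihedralQuotientRep_alternatingFun (ht : 2 • t = 0) (hπ : 2 • π 1 = 0) (hπ_c : π c = 0)
    (g : DihedralGroup N) :
    dihedralQuotientRep E E' c (π 1) g
        ((alternatingFun ht hπ hπ_c, 0) : antiperiodicFun E c × E') =
      ((alternatingFun ht hπ hπ_c, 0) : antiperiodicFun E c × E') := by
  refine antiperiodicQuotient_mk_eq_mk.2 ⟨?_, smul_zero _⟩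
  change ∃ m : ℤ, ∀ i, t + π (dihedralVertex g i) - (t + π i) = m • π 1
  obtain ⟨k, hk⟩ : ∃ k : ℤ, ∀ i, π (dihedralVertex g i) = π i + π k := by
    rcases g with j | j
    · obtain ⟨k, hk⟩ := ZMod.intCast_surjective (-j)
      exact ⟨k, fun i ↦ by rw [hk, ← map_add, ← sub_eq_add_neg]; rfl⟩
    · obtain ⟨k, hk⟩ := ZMod.intCast_surjective (-1 - j)
      refine ⟨k, fun i ↦ ?_⟩
      rw [hk, ← neg_eq_of_add_eq_zero_left
        ((two_nsmul (π i)).symm.trans (two_nsmul_map_eq_zero hπ i)), neg_add_eq_sub, ← map_sub]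
      rfl
  refine ⟨k, fun i ↦ ?_⟩
  rw [hk, map_intCast_eq_zsmul]
  abel

theorem dihedralQuotientRep_sr_add_ne (ht : 2 • t = 0) (hπ : 2 • π 1 = 0) (hπ_c : π c = 0)
    (hπ_one : π 1 ≠ 0) (ht_mem : t ∉ zmultiples (π 1)) (y : E') (j : ZMod N)
    (x : AntiperiodicQuotient E E' c (π 1)) :
    dihedralQuotientRep E E' c (π 1) (sr j) x +
      ((alternatingFun ht hπ hπ_c, y) : antiperiodicFun E c × E') ≠ x := by
  induction x using QuotientAddGroup.induction_on with | H z
  intro hfix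
  obtain ⟨m, hm⟩ : ∃ m : ℤ, ∀ i, z.1.1 (-1 - j - i) + (t + π i) - z.1.1 i = m • π 1 :=
    (antiperiodicQuotient_mk_eq_mk.1 hfix).1
  obtain ⟨k, hk⟩ := ZMod.intCast_surjective (-1 - j)
  rw [← hk] at hm
  rcases Int.even_or_odd' k with ⟨i, rfl | rfl⟩
  · have hm_axis : t + i • π 1 = m • π 1 := by
      rw [← hm i, ← map_intCast_eq_zsmul]
      push_cast
      rw [two_mul, add_sub_cancel_right, add_sub_cancel_left]
    exact ht_mem (mem_zmultiples_iff.2 ⟨m - i, by rw [sub_smul, ← hm_axis, add_sub_cancel_right]⟩)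
  · refine hπ_one ?_
    have hπ_k : π (2 * i + 1 : ℤ) = π 1 := by
      rw [map_intCast_eq_zsmul, add_zsmul, mul_zsmul', one_zsmul, ofNat_zsmul, hπ,
        smul_zero, zero_add]
    have h_zero := hm 0
    have h_swap := hm (2 * i + 1 : ℤ)
    rw [sub_zero, map_zero, add_zero] at h_zero
    rw [sub_self, hπ_k] at h_swap
    calc π 1 = 2 • t + π 1 := by rw [ht, zero_add]
      _ = (z.1.1 (2 * i + 1 : ℤ) + t - z.1.1 0) +
          (z.1.1 0 + (t + π 1) - z.1.1 (2 * i + 1 : ℤ)) := by rw [two_nsmul]; abel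
      _ = m • π 1 + m • π 1 := by rw [h_zero, h_swap]
      _ = 0 := by rw [← two_nsmul, smul_comm, hπ, smul_zero]

theorem hasFreeAffineAction_antiperiodicQuotient {e : E} {y : E'}
    (hc : c ≠ 0) (hc_one : c ≠ 1) (hc_two : c + c = 0) (ht : 2 • t = 0) (hπ : 2 • π 1 = 0)
    (hπ_c : π c = 0) (hπ_one : π 1 ≠ 0) (ht_mem : t ∉ zmultiples (π 1)) (he : 2 • e ≠ 0)
    (hχ : Function.Injective χ) (hy : 2 • y ≠ 0) :
    HasFreeAffineAction (DihedralGroup N) (AntiperiodicQuotient E E' c (π 1)) := by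
  let mk := QuotientAddGroup.mk' (constSubgroup E E' c (π 1))
  let γ : ZMod N →+ AntiperiodicQuotient E E' c (π 1) :=
    mk.comp ((AddMonoidHom.inr (antiperiodicFun E c) E').comp χ)
  let b := alternatingFun ht hπ hπ_c
  have hb_two : 2 • b = 0 := Subtype.ext (funext (two_nsmul_add_map_eq_zero ht hπ))
  refine hasFreeAffineAction_of_cocycle (dihedralQuotientRep E E' c (π 1))
    (dihedralCocycle γ (mk (b, 0)))
    (dihedralCocycle_mul (fun i j ↦ ?_) (fun i j ↦ ?_)
      (dihedralQuotientRep_alternatingFun ht hπ hπ_c) ?_) ?_ ?_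
  · exact congrArg mk (Prod.ext rfl (one_smul _ _))
  · exact congrArg mk (Prod.ext neg_zero.symm ((Units.neg_smul _ _).trans (by rw [one_smul]; rfl)))
  · exact congrArg mk (Prod.ext hb_two (smul_zero 2))
  · rintro (j | j) hg
    · exact exists_dihedralQuotientRep_r_ne hc hc_one hc_two hπ he fun hj ↦ hg (congrArg r hj)
    · exact exists_dihedralQuotientRep_sr_ne (π 1) hy j
  · rintro (j | j) hg x
    · exact dihedralQuotientRep_r_add_ne (π 1) hχ (fun hj ↦ hg (congrArg r hj)) x
    · have hβ : dihedralCocycle γ (mk (b, 0)) (sr j) = mk (b, -χ j) :=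
        congrArg mk (Prod.ext (sub_zero b) (zero_sub (χ j)))
      rw [hβ]
      exact dihedralQuotientRep_sr_add_ne ht hπ hπ_c hπ_one ht_mem (-χ j) j x

end AntiperiodicModel

section Restriction

open AddSubgroup

variable {E E' : Type*} [AddCommGroup E] [AddCommGroup E'] {N m : ℕ}

theorem natCast_half_add_self (hN : N = 2 * m) : (m : ZMod N) + m = 0 := by
  rw [← two_mul, ← Nat.cast_two, ← Nat.cast_mul, ← hN, ZMod.natCast_self]

theorem natCast_half_ne_zero [NeZero N] (hN : N = 2 * m) : (m : ZMod N) ≠ 0 := by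
  have hN_pos := NeZero.pos N
  rw [Ne, ZMod.natCast_eq_zero_iff]
  exact Nat.not_dvd_of_pos_of_lt (by lia) (by lia)

theorem natCast_half_ne_one [NeZero N] (hN : N = 2 * m) (hm : m ≠ 1) : (m : ZMod N) ≠ 1 := by
  have hN_pos := NeZero.pos N
  rw [← Nat.cast_one, Ne, ZMod.natCast_eq_natCast_iff', Nat.mod_eq_of_lt (by lia),
    Nat.mod_eq_of_lt (by lia)]
  exact hm

theorem val_add_natCast_half_of_lt [NeZero N] (hN : N = 2 * m) {i : ZMod N} (hi : i.val < m) :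
    (i + m).val = i.val + m := by
  have hm : (m : ZMod N).val = m := ZMod.val_natCast_of_lt (by lia)
  rw [ZMod.val_add_of_lt (by lia), hm]

theorem val_add_natCast_half_of_le [NeZero N] (hN : N = 2 * m) {i : ZMod N} (hi : m ≤ i.val) :
    (i + m).val = i.val - m := by
  have hi_lt := i.val_lt
  have hm : (m : ZMod N).val = m := ZMod.val_natCast_of_lt (by lia)
  have hval := ZMod.val_add_val_of_le (a := i) (b := (m : ZMod N)) (by lia)
  lia

theorem natCast_val_sub_half [NeZero N] (hN : N = 2 * m) {i : ZMod N} (hi : m ≤ i.val) :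
    ((i.val - m : ℕ) : ZMod N) = i + m := by
  rw [← val_add_natCast_half_of_le hN hi, ZMod.natCast_zmod_val]

/-- An antiperiodic function on `ZMod (2m)` is determined by its values on `0, …, m - 1`, which are
arbitrary. -/
def antiperiodicFunEquiv [NeZero N] (hN : N = 2 * m) :
    antiperiodicFun E (m : ZMod N) ≃+ (Fin m → E) where
  toFun f k := f.1 (k : ℕ)
  invFun z :=
    { val i := if hi : i.val < m then z ⟨i.val, hi⟩
        else -z ⟨i.val - m, by have := i.val_lt; lia⟩
      property i := by
        rcases lt_or_ge i.val m with hi | hi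
        · simp [val_add_natCast_half_of_lt hN hi, hi]
        · have hi_sub : i.val - m < m := by have := i.val_lt; lia
          simp [val_add_natCast_half_of_le hN hi, hi.not_gt, hi_sub] }
  left_inv f := Subtype.ext (funext fun i ↦ by
    rcases lt_or_ge i.val m with hi | hi
    · simp [hi]
    · simp [hi.not_gt, natCast_val_sub_half hN hi, f.2 i])
  right_inv z := funext fun k ↦ by
    have hk : ((k : ℕ) : ZMod N).val = k := ZMod.val_natCast_of_lt (by lia)
    simp [hk]
  map_add' _ _ := rfl

theorem map_constSubgroup_antiperiodicFunEquiv [NeZero N] (hN : N = 2 * m) {h : E}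
    (hh : 2 • h = 0) :
    (constSubgroup E E' (m : ZMod N) h).map
        (((antiperiodicFunEquiv hN).prodCongr (AddEquiv.refl E') :
          antiperiodicFun E (m : ZMod N) × E' ≃+ (Fin m → E) × E') : _ →+ _) =
      closure {((fun _ ↦ h, 0) : (Fin m → E) × E')} := by
  have hh_neg : h = -h := by rw [← add_eq_zero_iff_eq_neg, ← two_nsmul, hh]
  let b : antiperiodicFun E (m : ZMod N) := ⟨fun _ ↦ h, fun _ ↦ hh_neg⟩
  have hconst : constSubgroup E E' (m : ZMod N) h = closure {(b, 0)} := by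
    ext x
    rw [mem_constSubgroup, mem_closure_singleton]
    simp [b, Prod.ext_iff, Subtype.ext_iff, funext_iff, eq_comm]
  rw [hconst, AddMonoidHom.map_closure, Set.image_singleton]
  rfl

end Restriction

section ComplexTorus

theorem mem_Lam_iff {τ z : ℂ} : z ∈ Lam τ ↔ ∃ k l : ℤ, k + l * τ = z := by
  simp [Lam, AddSubgroup.mem_closure_pair]

theorem addOrderOf_mk_of_mul_eq_one {τ z : ℂ} (hτ : τ.im ≠ 0) {m : ℕ} (hz : m * z = 1) :
    addOrderOf (z : Ell τ) = m := by
  have nsmul_eq_zero_iff (k : ℕ) : k • (z : Ell τ) = 0 ↔ k * z ∈ Lam τ := by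
    rw [← QuotientAddGroup.mk_nsmul, QuotientAddGroup.eq_zero_iff, nsmul_eq_mul]
  refine Nat.dvd_antisymm ?_ ?_
  · rw [addOrderOf_dvd_iff_nsmul_eq_zero, nsmul_eq_zero_iff, hz]
    exact mem_Lam_iff.2 ⟨1, 0, by simp⟩
  · obtain ⟨k, l, hkl⟩ :=
      mem_Lam_iff.1 ((nsmul_eq_zero_iff _).1 (addOrderOf_nsmul_eq_zero (z : Ell τ)))
    set d := addOrderOf (z : Ell τ)
    have hd : (m * k : ℂ) + (m * l : ℝ) * τ = d := by
      push_cast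
      linear_combination (m : ℂ) * hkl + (d : ℂ) * hz
    have hml : (m * l : ℝ) = 0 := by
      simpa [hτ] using congrArg Complex.im hd
    rw [hml, Complex.ofReal_zero, zero_mul, add_zero] at hd
    exact Int.natCast_dvd_natCast.1 ⟨k, by exact_mod_cast hd.symm⟩

theorem addOrderOf_half {τ : ℂ} (hτ : τ.im ≠ 0) : addOrderOf ((1 / 2 : ℂ) : Ell τ) = 2 :=
  addOrderOf_mk_of_mul_eq_one hτ (by norm_num)

theorem addOrderOf_quarter {τ : ℂ} (hτ : τ.im ≠ 0) : addOrderOf ((1 / 4 : ℂ) : Ell τ) = 4 :=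
  addOrderOf_mk_of_mul_eq_one hτ (by norm_num)

theorem two_nsmul_quarter_ne_zero {τ : ℂ} (hτ : τ.im ≠ 0) : 2 • ((1 / 4 : ℂ) : Ell τ) ≠ 0 :=
  nsmul_ne_zero_of_lt_addOrderOf two_ne_zero (by rw [addOrderOf_quarter hτ]; norm_num)

theorem addOrderOf_cE' {n : ℕ} (hn : n ≠ 0) {τ : ℂ} (hτ : τ.im ≠ 0) :
    addOrderOf (cE' n τ) = 4 * n := by
  have hn_cast : (n : ℂ) ≠ 0 := Nat.cast_ne_zero.2 hn
  exact addOrderOf_mk_of_mul_eq_one hτ (by push_cast; field_simp)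

theorem two_nsmul_tau_half (τ : ℂ) : 2 • ((τ / 2 : ℂ) : Ell τ) = 0 := by
  rw [← QuotientAddGroup.mk_nsmul, QuotientAddGroup.eq_zero_iff]
  exact mem_Lam_iff.2 ⟨0, 1, by
    rw [Int.cast_zero, Int.cast_one, zero_add, one_mul, two_nsmul, add_halves]⟩

theorem tau_half_notMem_zmultiples {τ : ℂ} (hτ : τ.im ≠ 0) :
    ((τ / 2 : ℂ) : Ell τ) ∉ AddSubgroup.zmultiples ((1 / 2 : ℂ) : Ell τ) := by
  intro hmem
  obtain ⟨m, hm⟩ := AddSubgroup.mem_zmultiples_iff.1 hmem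
  rw [← QuotientAddGroup.mk_zsmul, QuotientAddGroup.eq_iff_sub_mem] at hm
  obtain ⟨k, l, hkl⟩ := mem_Lam_iff.1 hm
  have him : (2 * l + 1 : ℝ) * τ.im = 0 := by
    have hkl_im : l * τ.im = -(τ.im / 2) := by simpa using congrArg Complex.im hkl
    linear_combination 2 * hkl_im
  have hodd : (2 * l + 1 : ℝ) = 0 := (mul_eq_zero.1 him).resolve_right hτ
  have : 2 * l + 1 = 0 := by exact_mod_cast hodd
  lia

end ComplexTorus

theorem stmt_16_general {n : ℕ} (hn : 1 ≤ n) {E E' : Type*} [AddCommGroup E] [AddCommGroup E']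
    {h t e : E} {c : E'} (hh : addOrderOf h = 2) (ht : 2 • t = 0)
    (ht_mem : t ∉ AddSubgroup.zmultiples h) (he : 2 • e ≠ 0) (hc : addOrderOf c = 4 * n) :
    HasFreeAffineAction (DihedralGroup (4 * n)) (((Fin (2 * n) → E) × E') ⧸
      AddSubgroup.closure {((fun _ ↦ h, 0) : (Fin (2 * n) → E) × E')}) := by
  have : NeZero (4 * n) := ⟨by lia⟩
  have hN : 4 * n = 2 * (2 * n) := by ring
  have hh_two : 2 • h = 0 := hh ▸ addOrderOf_nsmul_eq_zero h
  have hh_ne : h ≠ 0 := fun h_zero ↦ by simp [h_zero] at hh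
  have hc_two : 2 • c ≠ 0 := nsmul_ne_zero_of_lt_addOrderOf two_ne_zero (by lia)
  obtain ⟨χ, hχ⟩ : ∃ χ : ZMod (4 * n) →+ E', Function.Injective χ :=
    hc ▸ exists_injective_zmod_addMonoidHom c
  obtain ⟨π, rfl⟩ : ∃ π : ZMod (4 * n) →+ E, π 1 = h :=
    exists_zmod_addMonoidHom_one_eq (by rw [hN, mul_comm 2, mul_smul, hh_two, smul_zero])
  have hπ_half : π (2 * n : ℕ) = 0 := by
    rw [← nsmul_one, map_nsmul, mul_comm 2, mul_smul, hh_two, smul_zero]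
  refine HasFreeAffineAction.of_addEquiv
    (QuotientAddGroup.congr _ _ ((antiperiodicFunEquiv hN).prodCongr (AddEquiv.refl E'))
      (map_constSubgroup_antiperiodicFunEquiv hN hh_two))
    (hasFreeAffineAction_antiperiodicQuotient (natCast_half_ne_zero hN)
      (natCast_half_ne_one hN (by lia)) (natCast_half_add_self hN) ht hh_two hπ_half hh_ne ht_mem
      he hχ hc_two)

/-- D_{4n} embeds into the bijections of A = A'/⟨w⟩, acting by affine
transformations, freely, and without translations. -/
theorem stmt_16 (n : ℕ) (hn : 1 ≤ n) (τ τ' : ℂ) (hτ : τ.im ≠ 0) (hτ' : τ'.im ≠ 0) :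
    ∃ φ : DihedralGroup (4*n) →* Equiv.Perm (Aq n τ τ'),
      Function.Injective φ ∧
      (∀ g : DihedralGroup (4*n), ∃ α : Aq n τ τ' ≃+ Aq n τ τ', ∃ a : Aq n τ τ',
        ∀ x : Aq n τ τ', φ g x = α x + a) ∧
      (∀ g : DihedralGroup (4*n), g ≠ 1 → ∀ x : Aq n τ τ', φ g x ≠ x) ∧
      (∀ g : DihedralGroup (4*n), g ≠ 1 →
        ¬ ∃ a : Aq n τ τ', ∀ x : Aq n τ τ', φ g x = x + a) :=
  stmt_16_general hn (addOrderOf_half hτ) (two_nsmul_tau_half τ)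
    (tau_half_notMem_zmultiples hτ) (two_nsmul_quarter_ne_zero hτ) (addOrderOf_cE' (by lia) hτ')
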